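/- (Theorem 5, invariance and homogeneity part) Suppose n is odd, λ = 1/2, and p ≥ 1, and define Z_p(φ,ψ) = T_p(C^{1/2}_p(S_p φ, S_p ψ)). Then Z_p is infinitesimally sl_{n+1}(ℝ)-invariant: {μ, Z_p(φ,ψ)} = Z_p({μ,φ}, ψ) + Z_p(φ, {μ,ψ}) for every momentum function μ ∈ M and all φ, ψ ∈ A. Moreover Z_p has total homogeneous degree −p: for φ ∈ A^j and ψ ∈ A^k, Z_p(φ,ψ) ∈ A^{j+k−p}. -/

import Mathlib

open MvPolynomial

/-- The polynomial symbol algebra `A = ℂ[u₁,…,uₙ,ξ₁,…,ξₙ]`: variables `Sum.inl i` are the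
`uᵢ` and variables `Sum.inr i` are the `ξᵢ`. -/
abbrev PolA (n : ℕ) := MvPolynomial (Fin n ⊕ Fin n) ℂ

namespace LO

/-- ξ-degree of a monomial exponent. -/
def xiDeg {n : ℕ} (d : (Fin n ⊕ Fin n) →₀ ℕ) : ℕ :=
  ∑ i : Fin n, d (Sum.inr i)

/-- `c(E)`: the operator multiplying the ξ-degree-`m` component by `c m`. -/
noncomputable def cE {n : ℕ} (c : ℕ → ℂ) (φ : PolA n) : PolA n :=
  ∑ d ∈ φ.support, monomial d (c (xiDeg d) * coeff d φ)

/-- `D = Σᵢ ∂²/∂uᵢ∂ξᵢ`. -/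
noncomputable def Dop {n : ℕ} (φ : PolA n) : PolA n :=
  ∑ i : Fin n, pderiv (Sum.inl i) (pderiv (Sum.inr i) φ)

/-- The scalar `h^λ_d(m)`. -/
noncomputable def hScal (n : ℕ) (lam : ℂ) (d m : ℕ) : ℂ :=
  (d.factorial : ℂ)⁻¹ *
    ∏ j ∈ Finset.range d,
      ((m : ℂ) + (j : ℂ) + lam * ((n : ℂ) + 1)) /
        (2 * (m : ℂ) + (j : ℂ) + (n : ℂ) + (d : ℂ))

/-- The scalar `g^λ_d(m)`. -/
noncomputable def gScal (n : ℕ) (lam : ℂ) (d m : ℕ) : ℂ :=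
  (d.factorial : ℂ)⁻¹ *
    ∏ j ∈ Finset.range d,
      (-(m : ℂ) - (j : ℂ) - lam * ((n : ℂ) + 1)) /
        (2 * (m : ℂ) + (j : ℂ) + (n : ℂ) + 1)

/-- `bh^λ_d = h^λ_d(E) ∘ D^d` (equal to the identity for `d = 0`). -/
noncomputable def bh {n : ℕ} (lam : ℂ) (d : ℕ) (φ : PolA n) : PolA n :=
  cE (hScal n lam d) (Dop^[d] φ)

/-- `bg^λ_d = g^λ_d(E) ∘ D^d` (equal to the identity for `d = 0`). -/
noncomputable def bg {n : ℕ} (lam : ℂ) (d : ℕ) (φ : PolA n) : PolA n :=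
  cE (gScal n lam d) (Dop^[d] φ)

/-- `N_k(φ,ψ) = (1/k!) Σ_{α ∈ {1,…,n}^k} ∂^kφ/∂ξ_α · ∂^kψ/∂u_α`. -/
noncomputable def Nop {n : ℕ} (k : ℕ) (φ ψ : PolA n) : PolA n :=
  (k.factorial : ℂ)⁻¹ •
    ∑ α : Fin k → Fin n,
      ((List.ofFn α).foldr (fun i acc => pderiv (Sum.inr i) acc) φ) *
      ((List.ofFn α).foldr (fun i acc => pderiv (Sum.inl i) acc) ψ)

/-- The coefficient `C^λ_p` of the Lecomte–Ovsienko star product. -/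
noncomputable def C (n : ℕ) (lam : ℂ) (p : ℕ) (φ ψ : PolA n) : PolA n :=
  ∑ i ∈ Finset.range (p + 1), ∑ j ∈ Finset.range (p + 1),
    ∑ k ∈ Finset.range (p + 1), ∑ m ∈ Finset.range (p + 1),
      if i + j + k + m = p then bg lam m (Nop k (bh lam i φ) (bh lam j ψ)) else 0

/-- The Poisson bracket `{φ,ψ}`. -/
noncomputable def pb {n : ℕ} (φ ψ : PolA n) : PolA n :=
  ∑ i : Fin n,
    (pderiv (Sum.inr i) φ * pderiv (Sum.inl i) ψ
      - pderiv (Sum.inl i) φ * pderiv (Sum.inr i) ψ)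

/-- `φ ∈ A^m` (ξ-homogeneous of degree `m`; for `m < 0` this forces `φ = 0`). -/
def IsXiHomog {n : ℕ} (m : ℤ) (φ : PolA n) : Prop :=
  ∀ d ∈ φ.support, (xiDeg d : ℤ) = m

/-- The set of spanning momentum functions of the projective `sl_{n+1}(ℝ)`-action. -/
noncomputable def momSet (n : ℕ) : Set (PolA n) :=
  (Set.range fun i : Fin n => (X (Sum.inr i) : PolA n)) ∪
  (Set.range fun ij : Fin n × Fin n =>
    (X (Sum.inl ij.1) * X (Sum.inr ij.2) : PolA n)) ∪
  (Set.range fun i : Fin n =>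
    (X (Sum.inl i) * ∑ k : Fin n, X (Sum.inl k) * X (Sum.inr k) : PolA n))

/-- The span `M` of the momentum functions. -/
noncomputable def momSpan (n : ℕ) : Submodule ℂ (PolA n) := Submodule.span ℂ (momSet n)

/-- The Weyl algebra `W` of differential operators with polynomial coefficients,
as a subalgebra of `End_ℂ(A)`. -/
noncomputable def Weyl (n : ℕ) : Subalgebra ℂ (Module.End ℂ (PolA n)) :=
  Algebra.adjoin ℂ
    ((Set.range fun i : Fin n =>
        (LinearMap.mulLeft ℂ (X (Sum.inl i)) : Module.End ℂ (PolA n))) ∪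
     (Set.range fun i : Fin n =>
        (LinearMap.mulLeft ℂ (X (Sum.inr i)) : Module.End ℂ (PolA n))) ∪
     (Set.range fun v : Fin n ⊕ Fin n =>
        ((pderiv v).toLinearMap : Module.End ℂ (PolA n))))

/-- A bilinear map `B : A × A → A` is bidifferential if it is a finite sum
`B(φ,ψ) = Σ_α A_α(φ)·B_α(ψ)` with `A_α, B_α` in the Weyl algebra. -/
def Bidiff (n : ℕ) (B : PolA n → PolA n → PolA n) : Prop :=
  ∃ (N : ℕ) (Aop Bop : Fin N → Weyl n),
    ∀ φ ψ : PolA n,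
      B φ ψ = ∑ α : Fin N,
        (Aop α : Module.End ℂ (PolA n)) φ * (Bop α : Module.End ℂ (PolA n)) ψ

/-- The scalar by which `T_p = ∏_{i=1}^{⌊p/2⌋}(E'+i)` acts on `A^m`. -/
noncomputable def TScal (n p m : ℕ) : ℂ :=
  ∏ i ∈ Finset.Icc 1 (p / 2), ((m : ℂ) + (n : ℂ) / 2 + (i : ℂ))

/-- The scalar by which `S_p = ∏_{i=1}^{⌊p/2⌋}(E'−i)` acts on `A^m`. -/
noncomputable def SScal (n p m : ℕ) : ℂ :=
  ∏ i ∈ Finset.Icc 1 (p / 2), ((m : ℂ) + (n : ℂ) / 2 - (i : ℂ))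

/-- The operator `T_p`. -/
noncomputable def Tp (n p : ℕ) : PolA n → PolA n := cE (TScal n p)

/-- The operator `S_p`. -/
noncomputable def Sp (n p : ℕ) : PolA n → PolA n := cE (SScal n p)

/-- The fiberwise Euler operator `E = Σ ξᵢ ∂/∂ξᵢ` as an endomorphism. -/
noncomputable def Elin (n : ℕ) : Module.End ℂ (PolA n) :=
  ∑ i : Fin n,
    (LinearMap.mulLeft ℂ (X (Sum.inr i)) : Module.End ℂ (PolA n)) ∘ₗ
      (pderiv (Sum.inr i)).toLinearMap

/-- `E' = E + n/2` as an endomorphism. -/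
noncomputable def E'lin (n : ℕ) : Module.End ℂ (PolA n) :=
  Elin n + ((n : ℂ) / 2) • 1

/-- `D` as an endomorphism. -/
noncomputable def Dlin (n : ℕ) : Module.End ℂ (PolA n) :=
  ∑ i : Fin n,
    ((pderiv (Sum.inl i)).toLinearMap : Module.End ℂ (PolA n)) ∘ₗ
      (pderiv (Sum.inr i)).toLinearMap

/-- `L^{(m)} = −(1/16)(ξ_m∘D − 2E'∘∂/∂u_m)∘D`. -/
noncomputable def Lop (n : ℕ) (m : Fin n) : Module.End ℂ (PolA n) :=
  (-(1 / 16 : ℂ)) •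
    (((LinearMap.mulLeft ℂ (X (Sum.inr m)) : Module.End ℂ (PolA n)) ∘ₗ Dlin n
        - (2 : ℂ) • (E'lin n ∘ₗ (pderiv (Sum.inl m)).toLinearMap)) ∘ₗ Dlin n)

end LO

namespace LO

variable {n : ℕ}

theorem coeff_cE (c : ℕ → ℂ) (φ : PolA n) (d : (Fin n ⊕ Fin n) →₀ ℕ) :
    coeff d (cE c φ) = c (xiDeg d) * coeff d φ := by
  classical
  unfold cE
  rw [coeff_sum]
  simp only [coeff_monomial]
  rw [Finset.sum_ite_eq']
  split_ifs with h
  · rfl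
  · rw [notMem_support_iff.mp h, mul_zero]

/-- `c(E)` as a linear map. -/
noncomputable def cEl (c : ℕ → ℂ) : PolA n →ₗ[ℂ] PolA n where
  toFun := cE c
  map_add' x y := by ext d; simp only [coeff_cE, coeff_add]; ring
  map_smul' r x := by ext d; simp only [coeff_cE, coeff_smul, RingHom.id_apply, smul_eq_mul]; ring

theorem cEl_apply (c : ℕ → ℂ) (φ : PolA n) : cEl c φ = cE c φ := rfl

theorem cE_add (c : ℕ → ℂ) (x y : PolA n) : cE c (x + y) = cE c x + cE c y := (cEl c).map_add x y
theorem cE_sub (c : ℕ → ℂ) (x y : PolA n) : cE c (x - y) = cE c x - cE c y := (cEl c).map_sub x y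
theorem cE_neg (c : ℕ → ℂ) (x : PolA n) : cE c (-x) = -cE c x := (cEl c).map_neg x
theorem cE_zero (c : ℕ → ℂ) : cE c (0 : PolA n) = 0 := (cEl c).map_zero
theorem cE_smul (c : ℕ → ℂ) (r : ℂ) (x : PolA n) : cE c (r • x) = r • cE c x :=
  (cEl c).map_smul r x
theorem cE_sum (c : ℕ → ℂ) {ι : Type*} (s : Finset ι) (f : ι → PolA n) :
    cE c (∑ i ∈ s, f i) = ∑ i ∈ s, cE c (f i) := map_sum (cEl c) f s

theorem cE_monomial (c : ℕ → ℂ) (d : (Fin n ⊕ Fin n) →₀ ℕ) (r : ℂ) :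
    cE c (monomial d r : PolA n) = monomial d (c (xiDeg d) * r) := by
  classical
  ext e
  rw [coeff_cE, coeff_monomial, coeff_monomial]
  split_ifs with h
  · rw [h]
  · simp

theorem cE_cE (c c' : ℕ → ℂ) (φ : PolA n) : cE c (cE c' φ) = cE (fun m => c m * c' m) φ := by
  ext d; simp only [coeff_cE]; ring

theorem xiDeg_add (d e : (Fin n ⊕ Fin n) →₀ ℕ) : xiDeg (d + e) = xiDeg d + xiDeg e := by
  simp [xiDeg, Finset.sum_add_distrib]

theorem xiDeg_inl (i : Fin n) (k : ℕ) : xiDeg (Finsupp.single (Sum.inl i) k : (Fin n ⊕ Fin n) →₀ ℕ) = 0 := by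
  simp [xiDeg]

theorem xiDeg_inr (i : Fin n) (k : ℕ) : xiDeg (Finsupp.single (Sum.inr i) k : (Fin n ⊕ Fin n) →₀ ℕ) = k := by
  classical
  simp [xiDeg, Finsupp.single_apply]

theorem lin_ext (F G : PolA n →ₗ[ℂ] PolA n)
    (h : ∀ d r, F (monomial d r) = G (monomial d r)) (φ : PolA n) : F φ = G φ := by
  rw [as_sum φ, map_sum, map_sum]
  exact Finset.sum_congr rfl fun d _ => h d _

theorem cE_pderiv_inr (c : ℕ → ℂ) (i : Fin n) (φ : PolA n) :
    pderiv (Sum.inr i) (cE c φ) = cE (fun m => c (m + 1)) (pderiv (Sum.inr i) φ) := by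
  refine lin_ext (n := n) ((pderiv (Sum.inr i)).toLinearMap ∘ₗ cEl c)
    (cEl (fun m => c (m + 1)) ∘ₗ (pderiv (Sum.inr i)).toLinearMap) ?_ φ
  intro d r
  change pderiv (Sum.inr i) (cE c (monomial d r)) = cE (fun m => c (m + 1)) (pderiv (Sum.inr i) (monomial d r))
  rw [cE_monomial, pderiv_monomial, pderiv_monomial, cE_monomial]
  by_cases h : d (Sum.inr i) = 0
  · simp [h]
  · have : d = (d - Finsupp.single (Sum.inr i) 1) + Finsupp.single (Sum.inr i) 1 := by
      rw [tsub_add_cancel_of_le]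
      simpa [Nat.one_le_iff_ne_zero] using h
    congr 1
    conv_lhs => rw [this, xiDeg_add, xiDeg_inr]
    rw [← this]; ring

theorem cE_pderiv_inl (c : ℕ → ℂ) (i : Fin n) (φ : PolA n) :
    pderiv (Sum.inl i) (cE c φ) = cE c (pderiv (Sum.inl i) φ) := by
  refine lin_ext (n := n) ((pderiv (Sum.inl i)).toLinearMap ∘ₗ cEl c)
    (cEl c ∘ₗ (pderiv (Sum.inl i)).toLinearMap) ?_ φ
  intro d r
  change pderiv (Sum.inl i) (cE c (monomial d r)) = cE _ (pderiv (Sum.inl i) (monomial d r))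
  rw [cE_monomial, pderiv_monomial, pderiv_monomial, cE_monomial]
  by_cases h : d (Sum.inl i) = 0
  · simp [h]
  · have : d = (d - Finsupp.single (Sum.inl i) 1) + Finsupp.single (Sum.inl i) 1 := by
      rw [tsub_add_cancel_of_le]
      simpa [Nat.one_le_iff_ne_zero] using h
    congr 1
    conv_lhs => rw [this, xiDeg_add, xiDeg_inl, add_zero]
    rw [← this]; ring

theorem cE_X_inl (c : ℕ → ℂ) (i : Fin n) (φ : PolA n) :
    cE c (X (Sum.inl i) * φ) = X (Sum.inl i) * cE c φ := by
  have h := lin_ext (n := n) (cEl c ∘ₗ LinearMap.mulLeft ℂ (X (Sum.inl i)))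
    (LinearMap.mulLeft ℂ (X (Sum.inl i)) ∘ₗ cEl c) ?_ φ
  · simpa only [LinearMap.comp_apply, LinearMap.mulLeft_apply, cEl_apply] using h
  intro d r
  simp only [LinearMap.comp_apply, LinearMap.mulLeft_apply, cEl_apply]
  rw [X, cE_monomial, monomial_mul, monomial_mul, cE_monomial, xiDeg_add, xiDeg_inl, zero_add]
  congr 1; ring

theorem cE_X_inr (c : ℕ → ℂ) (i : Fin n) (φ : PolA n) :
    cE c (X (Sum.inr i) * φ) = X (Sum.inr i) * cE (fun m => c (m + 1)) φ := by
  have h := lin_ext (n := n) (cEl c ∘ₗ LinearMap.mulLeft ℂ (X (Sum.inr i)))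
    (LinearMap.mulLeft ℂ (X (Sum.inr i)) ∘ₗ cEl (fun m => c (m + 1))) ?_ φ
  · simpa only [LinearMap.comp_apply, LinearMap.mulLeft_apply, cEl_apply] using h
  intro d r
  simp only [LinearMap.comp_apply, LinearMap.mulLeft_apply, cEl_apply]
  rw [X, cE_monomial, monomial_mul, monomial_mul, cE_monomial, xiDeg_add, xiDeg_inr, add_comm 1]
  congr 1; ring

theorem cE_Xeta (c : ℕ → ℂ) (i j : Fin n) (φ : PolA n) :
    cE c (X (Sum.inr i) * pderiv (Sum.inr j) φ) = X (Sum.inr i) * pderiv (Sum.inr j) (cE c φ) := by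
  rw [cE_X_inr, cE_pderiv_inr]

theorem cE_euler (φ : PolA n) :
    cE (fun m => (m : ℂ)) φ = ∑ i : Fin n, X (Sum.inr i) * pderiv (Sum.inr i) φ := by
  have hE : ∀ x : PolA n, Elin n x = ∑ i : Fin n, X (Sum.inr i) * pderiv (Sum.inr i) x := by
    intro x; simp [Elin]
  rw [← hE]
  refine lin_ext (n := n) (cEl (fun m => (m : ℂ))) (Elin n) ?_ φ
  intro d r
  rw [hE, cEl_apply]
  rw [cE_monomial]
  have : ∀ i : Fin n, (X (Sum.inr i) * pderiv (Sum.inr i) (monomial d r) : PolA n) =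
      monomial d ((d (Sum.inr i) : ℂ) * r) := by
    intro i
    rw [pderiv_monomial]
    by_cases h : d (Sum.inr i) = 0
    · simp [h]
    · rw [X, monomial_mul, add_tsub_cancel_of_le, one_mul, mul_comm]
      simpa [Nat.one_le_iff_ne_zero] using h
  simp only [this]
  rw [← map_sum, ← Finset.sum_mul, xiDeg, Nat.cast_sum]

theorem cE_addfun (c c' : ℕ → ℂ) (φ : PolA n) : cE (fun m => c m + c' m) φ = cE c φ + cE c' φ := by
  ext d; simp only [coeff_cE, coeff_add]; ring

theorem cE_smulfun (r : ℂ) (c : ℕ → ℂ) (φ : PolA n) : cE (fun m => r * c m) φ = r • cE c φ := by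
  ext d; simp only [coeff_cE, coeff_smul, smul_eq_mul]; ring

theorem cE_const (r : ℂ) (φ : PolA n) : cE (fun _ => r) φ = r • φ := by
  ext d; simp only [coeff_cE, coeff_smul, smul_eq_mul]

theorem Dop_eq (φ : PolA n) : Dop φ = Dlin n φ := by simp [Dop, Dlin]

theorem pcomm (i j : Fin n ⊕ Fin n) (φ : PolA n) :
    pderiv i (pderiv j φ) = pderiv j (pderiv i φ) := by
  refine lin_ext (n := n) ((pderiv i).toLinearMap ∘ₗ (pderiv j).toLinearMap)
    ((pderiv j).toLinearMap ∘ₗ (pderiv i).toLinearMap) ?_ φ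
  intro d r
  change pderiv i (pderiv j (monomial d r)) = pderiv j (pderiv i (monomial d r))
  classical
  simp only [pderiv_monomial]
  by_cases h : i = j
  · rw [h]
  · rw [tsub_right_comm]
    congr 1
    simp [h, Ne.symm h]
    ring

theorem Dop_cE (c : ℕ → ℂ) (φ : PolA n) : Dop (cE c φ) = cE (fun m => c (m + 1)) (Dop φ) := by
  simp only [Dop, cE_pderiv_inr, cE_pderiv_inl, cE_sum]

theorem Dop_pderiv (v : Fin n ⊕ Fin n) (φ : PolA n) : Dop (pderiv v φ) = pderiv v (Dop φ) := by
  simp only [Dop, map_sum]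
  refine Finset.sum_congr rfl fun i _ => ?_
  rw [pcomm (Sum.inr i) v, pcomm (Sum.inl i) v]

/-- Unnormalised `N_k` as a bilinear map. -/
noncomputable def Ml (n : ℕ) : ℕ → (PolA n →ₗ[ℂ] PolA n →ₗ[ℂ] PolA n)
  | 0 => LinearMap.mul ℂ (PolA n)
  | k + 1 => ∑ i : Fin n, (Ml n k).compl₁₂ (pderiv (Sum.inr i)).toLinearMap
      (pderiv (Sum.inl i)).toLinearMap

theorem Ml_succ (k : ℕ) (φ ψ : PolA n) :
    Ml n (k + 1) φ ψ = ∑ i, Ml n k (pderiv (Sum.inr i) φ) (pderiv (Sum.inl i) ψ) := by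
  simp [Ml]

theorem Ml_zero (φ ψ : PolA n) : Ml n 0 φ ψ = φ * ψ := rfl

theorem fold_comm (v : Fin n ⊕ Fin n) (f : Fin n → Fin n ⊕ Fin n) (l : List (Fin n)) (φ : PolA n) :
    l.foldr (fun i acc => pderiv (f i) acc) (pderiv v φ) =
      pderiv v (l.foldr (fun i acc => pderiv (f i) acc) φ) := by
  induction l with
  | nil => rfl
  | cons a l ih => simp only [List.foldr_cons, ih]; rw [pcomm]

theorem Ml_eq (k : ℕ) : ∀ φ ψ : PolA n, Ml n k φ ψ = ∑ α : Fin k → Fin n,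
      ((List.ofFn α).foldr (fun i acc => pderiv (Sum.inr i) acc) φ) *
      ((List.ofFn α).foldr (fun i acc => pderiv (Sum.inl i) acc) ψ) := by
  induction k with
  | zero => intro φ ψ; simp [Ml_zero]
  | succ k ih =>
    intro φ ψ
    rw [Ml_succ, ← (Fin.consEquiv (fun _ => Fin n)).sum_comp, Fintype.sum_prod_type]
    refine Finset.sum_congr rfl fun i _ => ?_
    rw [ih]
    refine Finset.sum_congr rfl fun α _ => ?_
    rw [fold_comm (Sum.inr i) Sum.inr, fold_comm (Sum.inl i) Sum.inl]
    simp [Fin.consEquiv, List.ofFn_succ]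

theorem Ml_der_inr (k : ℕ) (j : Fin n ⊕ Fin n) : ∀ φ ψ : PolA n,
    pderiv j (Ml n k φ ψ) = Ml n k (pderiv j φ) ψ + Ml n k φ (pderiv j ψ) := by
  induction k with
  | zero => intro φ ψ; simp only [Ml_zero, Derivation.leibniz, smul_eq_mul]; ring
  | succ k ih =>
    intro φ ψ
    simp only [Ml_succ, map_sum, ih, Finset.sum_add_distrib]
    simp only [pcomm j]

theorem Ml_uL (k : ℕ) (j : Fin n) : ∀ φ ψ : PolA n,
    Ml n k (X (Sum.inl j) * φ) ψ = X (Sum.inl j) * Ml n k φ ψ := by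
  induction k with
  | zero => intro φ ψ; simp only [Ml_zero]; ring
  | succ k ih =>
    intro φ ψ
    simp [Ml_succ, ih, Derivation.leibniz, pderiv_X, Finset.mul_sum]

theorem Ml_xR (k : ℕ) (j : Fin n) : ∀ φ ψ : PolA n,
    Ml n k φ (X (Sum.inr j) * ψ) = X (Sum.inr j) * Ml n k φ ψ := by
  induction k with
  | zero => intro φ ψ; simp only [Ml_zero]; ring
  | succ k ih =>
    intro φ ψ
    simp [Ml_succ, ih, Derivation.leibniz, pderiv_X, Finset.mul_sum]

theorem Ml_uR (k : ℕ) (j : Fin n) : ∀ φ ψ : PolA n,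
    Ml n (k + 1) φ (X (Sum.inl j) * ψ) = X (Sum.inl j) * Ml n (k + 1) φ ψ
      + ((k : ℂ) + 1) • Ml n k (pderiv (Sum.inr j) φ) ψ := by
  have key : ∀ k (φ ψ : PolA n), Ml n (k + 1) φ (X (Sum.inl j) * ψ) =
      ∑ i, Ml n k (pderiv (Sum.inr i) φ) (X (Sum.inl j) * pderiv (Sum.inl i) ψ)
        + Ml n k (pderiv (Sum.inr j) φ) ψ := by
    intro k φ ψ
    simp only [Ml_succ, Derivation.leibniz, smul_eq_mul, map_add, Finset.sum_add_distrib]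
    congr 1
    rw [Finset.sum_eq_single j]
    · simp
    · intro b _ hb
      rw [pderiv_X_of_ne (by simpa using hb.symm)]; simp
    · simp
  induction k with
  | zero => intro φ ψ; rw [key]; simp [Ml_succ, Ml_zero, Finset.mul_sum, mul_left_comm]
  | succ k ih =>
    intro φ ψ
    rw [key]
    simp only [ih, Finset.sum_add_distrib]
    rw [Ml_succ (k + 1), Finset.mul_sum, add_assoc]
    congr 1
    rw [← Finset.smul_sum]
    simp only [pcomm (Sum.inr j)]
    rw [← Ml_succ]
    push_cast
    module

theorem Ml_xL (k : ℕ) (j : Fin n) : ∀ φ ψ : PolA n,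
    Ml n (k + 1) (X (Sum.inr j) * φ) ψ = X (Sum.inr j) * Ml n (k + 1) φ ψ
      + ((k : ℂ) + 1) • Ml n k φ (pderiv (Sum.inl j) ψ) := by
  have key : ∀ k (φ ψ : PolA n), Ml n (k + 1) (X (Sum.inr j) * φ) ψ =
      ∑ i, Ml n k (X (Sum.inr j) * pderiv (Sum.inr i) φ) (pderiv (Sum.inl i) ψ)
        + Ml n k φ (pderiv (Sum.inl j) ψ) := by
    intro k φ ψ
    simp only [Ml_succ, Derivation.leibniz, smul_eq_mul, map_add, Finset.sum_add_distrib,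
      LinearMap.add_apply]
    congr 1
    rw [Finset.sum_eq_single j]
    · simp
    · intro b _ hb
      rw [pderiv_X_of_ne (by simpa using hb.symm)]; simp
    · simp
  induction k with
  | zero => intro φ ψ; rw [key]; simp [Ml_succ, Ml_zero, Finset.mul_sum, mul_assoc]
  | succ k ih =>
    intro φ ψ
    rw [key]
    simp only [ih, Finset.sum_add_distrib]
    rw [Ml_succ (k + 1), Finset.mul_sum, add_assoc]
    congr 1
    rw [← Finset.smul_sum]
    simp only [pcomm (Sum.inl j)]
    rw [← Ml_succ]
    push_cast
    module

/-- `N_{k-2}`, zero for negative index. -/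
noncomputable def W (n : ℕ) : ℕ → (PolA n →ₗ[ℂ] PolA n →ₗ[ℂ] PolA n)
  | 0 => 0
  | 1 => 0
  | k + 2 => (k.factorial : ℂ)⁻¹ • Ml n k

theorem W_Nop (k : ℕ) (φ ψ : PolA n) : W n (k + 2) φ ψ = Nop k φ ψ := by
  simp only [W, LinearMap.smul_apply, Ml_eq, Nop]

theorem W_der (k : ℕ) (j : Fin n ⊕ Fin n) (φ ψ : PolA n) :
    pderiv j (W n k φ ψ) = W n k (pderiv j φ) ψ + W n k φ (pderiv j ψ) := by
  match k with
  | 0 => simp [W]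
  | 1 => simp [W]
  | k + 2 => simp only [W, LinearMap.smul_apply, Derivation.map_smul, Ml_der_inr, smul_add]

theorem W_uL (k : ℕ) (j : Fin n) (φ ψ : PolA n) :
    W n k (X (Sum.inl j) * φ) ψ = X (Sum.inl j) * W n k φ ψ := by
  match k with
  | 0 => simp [W]
  | 1 => simp [W]
  | k + 2 => simp only [W, LinearMap.smul_apply, Ml_uL, mul_smul_comm]

theorem W_xR (k : ℕ) (j : Fin n) (φ ψ : PolA n) :
    W n k φ (X (Sum.inr j) * ψ) = X (Sum.inr j) * W n k φ ψ := by
  match k with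
  | 0 => simp [W]
  | 1 => simp [W]
  | k + 2 => simp only [W, LinearMap.smul_apply, Ml_xR, mul_smul_comm]

theorem fact_aux (k : ℕ) : (((k + 1).factorial : ℂ)⁻¹) * ((k : ℂ) + 1) = (k.factorial : ℂ)⁻¹ := by
  rw [Nat.factorial_succ]
  push_cast
  have h1 : (k : ℂ) + 1 ≠ 0 := Nat.cast_add_one_ne_zero k
  have h2 : (k.factorial : ℂ) ≠ 0 := by exact_mod_cast k.factorial_ne_zero
  field_simp

theorem W_uR (k : ℕ) (j : Fin n) (φ ψ : PolA n) :
    W n (k + 1) φ (X (Sum.inl j) * ψ) = X (Sum.inl j) * W n (k + 1) φ ψ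
      + W n k (pderiv (Sum.inr j) φ) ψ := by
  match k with
  | 0 => simp [W]
  | 1 => simp only [W, LinearMap.smul_apply, Ml_zero]; simp [mul_left_comm]
  | k + 2 =>
    simp only [W, LinearMap.smul_apply, Ml_uR, mul_smul_comm, smul_add, smul_smul, fact_aux]

theorem W_xL (k : ℕ) (j : Fin n) (φ ψ : PolA n) :
    W n (k + 1) (X (Sum.inr j) * φ) ψ = X (Sum.inr j) * W n (k + 1) φ ψ
      + W n k φ (pderiv (Sum.inl j) ψ) := by
  match k with
  | 0 => simp [W]
  | 1 => simp only [W, LinearMap.smul_apply, Ml_zero]; simp [mul_assoc]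
  | k + 2 =>
    simp only [W, LinearMap.smul_apply, Ml_xL, mul_smul_comm, smul_add, smul_smul, fact_aux]

/-- The lower order part of the action on operators. -/
noncomputable def L1 (lam : ℂ) (η : PolA n →ₗ[ℂ] PolA n) : PolA n →ₗ[ℂ] PolA n :=
  -(cEl (fun m => (m : ℂ) + lam * ((n : ℂ) + 1)) ∘ₗ η)

theorem L1_apply (lam : ℂ) (η : PolA n →ₗ[ℂ] PolA n) (φ : PolA n) :
    L1 lam η φ = -cE (fun m => (m : ℂ) + lam * ((n : ℂ) + 1)) (η φ) := rfl

/-- The commutation properties of a momentum action. -/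
structure Act (lam : ℂ) (L η : PolA n →ₗ[ℂ] PolA n) : Prop where
  commE : ∀ c φ, L (cE c φ) = cE c (L φ)
  etaE : ∀ c φ, η (cE c φ) = cE (fun m => c (m + 1)) (η φ)
  etaD : ∀ φ, Dop (η φ) = η (Dop φ)
  DL : ∀ φ, Dop (L φ) = L (Dop φ) - cE (fun m => 2 * (m : ℂ) + n + 1) (η φ)
  NL : ∀ k φ ψ, L (W n (k + 2) φ ψ) + L1 lam η (W n (k + 1) φ ψ) =
    W n (k + 2) (L φ) ψ + W n (k + 2) φ (L ψ) +
    (W n (k + 1) (L1 lam η φ) ψ + W n (k + 1) φ (L1 lam η ψ))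

theorem Dop_sub (x y : PolA n) : Dop (x - y) = Dop x - Dop y := by
  simp only [Dop_eq, map_sub]

theorem Act.iter {lam : ℂ} {L η : PolA n →ₗ[ℂ] PolA n} (h : Act lam L η) (d : ℕ) (φ : PolA n) :
    Dop^[d + 1] (L φ) = L (Dop^[d + 1] φ) -
      cE (fun m => ((d : ℂ) + 1) * (2 * (m : ℂ) + n + d + 1)) (η (Dop^[d] φ)) := by
  induction d with
  | zero => simp [h.DL]
  | succ d ih =>
    rw [Function.iterate_succ_apply', ih, Dop_sub, h.DL, Dop_cE, h.etaD,
      ← Function.iterate_succ_apply' Dop (d + 1), ← Function.iterate_succ_apply' Dop d,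
      sub_sub, ← cE_addfun]
    congr 3
    funext m
    push_cast
    ring

theorem Dop_iter_cE (c : ℕ → ℂ) (d : ℕ) (φ : PolA n) :
    Dop^[d] (cE c φ) = cE (fun m => c (m + d)) (Dop^[d] φ) := by
  induction d with
  | zero => rfl
  | succ d ih =>
    rw [Function.iterate_succ_apply', ih, Dop_cE, ← Function.iterate_succ_apply' Dop d]
    congr 1
    funext m
    congr 1
    ring

theorem Act.iter_eta {lam : ℂ} {L η : PolA n →ₗ[ℂ] PolA n} (h : Act lam L η) (d : ℕ) (φ : PolA n) :
    Dop^[d] (η φ) = η (Dop^[d] φ) := by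
  induction d with
  | zero => rfl
  | succ d ih =>
    rw [Function.iterate_succ_apply', ih, h.etaD, ← Function.iterate_succ_apply' Dop d]

theorem hrec (n : ℕ) (lam : ℂ) (d m : ℕ) :
    hScal n lam (d + 1) m * (((d : ℂ) + 1) * (2 * (m : ℂ) + n + d + 1)) =
      ((m : ℂ) + lam * ((n : ℂ) + 1)) * hScal n lam d (m + 1) := by
  unfold hScal
  rw [Finset.prod_range_succ', ← fact_aux d]
  have h : ∀ j : ℕ, ((m : ℂ) + ((j + 1 : ℕ) : ℂ) + lam * ((n : ℂ) + 1)) /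
        (2 * (m : ℂ) + ((j + 1 : ℕ) : ℂ) + (n : ℂ) + ((d + 1 : ℕ) : ℂ)) =
      (((m + 1 : ℕ) : ℂ) + (j : ℂ) + lam * ((n : ℂ) + 1)) /
        (2 * ((m + 1 : ℕ) : ℂ) + (j : ℂ) + (n : ℂ) + (d : ℂ)) := by
    intro j
    push_cast
    congr 1 <;> ring
  simp only [h]
  have hne : (2 * (m : ℂ) + n + d + 1) ≠ 0 := by
    have : ((2 * m + n + d + 1 : ℕ) : ℂ) ≠ 0 := Nat.cast_ne_zero.mpr (by omega)
    push_cast at this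
    exact this
  have h2 : ((m : ℂ) + ((0 : ℕ) : ℂ) + lam * ((n : ℂ) + 1)) /
        (2 * (m : ℂ) + ((0 : ℕ) : ℂ) + (n : ℂ) + ((d + 1 : ℕ) : ℂ)) * (2 * (m : ℂ) + n + d + 1) =
        (m : ℂ) + lam * ((n : ℂ) + 1) := by
    have e : (2 * (m : ℂ) + ((0 : ℕ) : ℂ) + (n : ℂ) + ((d + 1 : ℕ) : ℂ)) =
      (2 * (m : ℂ) + n + d + 1) := by push_cast; ring
    rw [e, div_mul_cancel₀ _ hne]
    simp
  rw [← h2]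
  ring

theorem grec (n : ℕ) (lam : ℂ) (d m : ℕ) :
    gScal n lam (d + 1) m * (((d : ℂ) + 1) * (2 * (m : ℂ) + n + d + 1)) =
      -(gScal n lam d m * (((m + d : ℕ) : ℂ) + lam * ((n : ℂ) + 1))) := by
  unfold gScal
  rw [Finset.prod_range_succ, ← fact_aux d]
  have hne : (2 * (m : ℂ) + d + n + 1) ≠ 0 := by
    have : ((2 * m + d + n + 1 : ℕ) : ℂ) ≠ 0 := Nat.cast_ne_zero.mpr (by omega)
    push_cast at this
    exact this
  have h2 : (-(m : ℂ) - (d : ℂ) - lam * ((n : ℂ) + 1)) /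
        (2 * (m : ℂ) + (d : ℂ) + (n : ℂ) + 1) * (2 * (m : ℂ) + n + d + 1) =
        -(((m + d : ℕ) : ℂ) + lam * ((n : ℂ) + 1)) := by
    have e : (2 * (m : ℂ) + n + d + 1) = (2 * (m : ℂ) + d + n + 1) := by ring
    rw [e, div_mul_cancel₀ _ hne]
    push_cast; ring
  linear_combination (((d + 1).factorial : ℂ)⁻¹ * (∏ x ∈ Finset.range d,
      (-(m : ℂ) - (x : ℂ) - lam * ((n : ℂ) + 1)) / (2 * (m : ℂ) + (x : ℂ) + (n : ℂ) + 1)) * ((d : ℂ) + 1)) * h2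

theorem h0 (n : ℕ) (lam : ℂ) (φ : PolA n) : bh lam 0 φ = φ := by
  have : hScal n lam 0 = fun _ => (1 : ℂ) := by funext m; simp [hScal]
  simp [bh, this, cE_const]

theorem g0 (n : ℕ) (lam : ℂ) (φ : PolA n) : bg lam 0 φ = φ := by
  have : gScal n lam 0 = fun _ => (1 : ℂ) := by funext m; simp [gScal]
  simp [bg, this, cE_const]

theorem Act.h_succ {lam : ℂ} {L η : PolA n →ₗ[ℂ] PolA n} (h : Act lam L η) (d : ℕ) (φ : PolA n) :
    L (bh lam (d + 1) φ) + L1 lam η (bh lam d φ) = bh lam (d + 1) (L φ) := by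
  unfold bh
  rw [h.iter, cE_sub, h.commE, L1_apply, h.etaE, cE_cE, cE_cE, sub_eq_add_neg]
  simp only [hrec]

theorem Act.g_succ {lam : ℂ} {L η : PolA n →ₗ[ℂ] PolA n} (h : Act lam L η) (d : ℕ) (φ : PolA n) :
    L (bg lam (d + 1) φ) = bg lam (d + 1) (L φ) + bg lam d (L1 lam η φ) := by
  have hneg : ∀ (x : PolA n), Dop^[d] (-x) = - Dop^[d] x := by
    intro x
    have : (Dop : PolA n → PolA n) = Dlin n := funext Dop_eq
    rw [this, ← Module.End.pow_apply, ← Module.End.pow_apply, map_neg]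
  unfold bg
  rw [h.iter, cE_sub, h.commE, L1_apply, hneg, Dop_iter_cE, h.iter_eta, cE_neg, cE_cE, cE_cE]
  simp only [grec]
  have : ∀ (c : ℕ → ℂ) (x : PolA n), cE (fun m => - c m) x = - cE c x := by
    intro c x; ext d; simp [coeff_cE]
  rw [this]
  abel

/-- Shift of a sequence. -/
def pv {M : Type*} [Zero M] (f : ℕ → M) : ℕ → M
  | 0 => 0
  | k + 1 => f k

section sums
open Finset
variable {M M' : Type*} [AddCommGroup M] [AddCommGroup M']

theorem pv_sum1 (f : ℕ → ℕ → M) (q : ℕ) :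
    ∑ x ∈ antidiagonal q, pv (fun k => f k x.2) x.1 = pv (fun q => ∑ x ∈ antidiagonal q, f x.1 x.2) q := by
  cases q with
  | zero => simp [pv]
  | succ q => rw [Finset.Nat.sum_antidiagonal_succ]; simp [pv]

theorem pv_sum2 (f : ℕ → ℕ → M) (q : ℕ) :
    ∑ x ∈ antidiagonal q, pv (f x.1) x.2 = pv (fun q => ∑ x ∈ antidiagonal q, f x.1 x.2) q := by
  cases q with
  | zero => simp [pv]
  | succ q => rw [Finset.Nat.sum_antidiagonal_succ']; simp [pv]

end sums

/-- The linear version of `bh`. -/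
noncomputable def bhl (n : ℕ) (lam : ℂ) (d : ℕ) : PolA n →ₗ[ℂ] PolA n :=
  cEl (hScal n lam d) ∘ₗ (Dlin n) ^ d
/-- The linear version of `bg`. -/
noncomputable def bgl (n : ℕ) (lam : ℂ) (d : ℕ) : PolA n →ₗ[ℂ] PolA n :=
  cEl (gScal n lam d) ∘ₗ (Dlin n) ^ d

theorem bhl_apply (lam : ℂ) (d : ℕ) (φ : PolA n) : bhl n lam d φ = bh lam d φ := by
  have : (Dop : PolA n → PolA n) = Dlin n := funext Dop_eq
  simp [bhl, bh, this, Module.End.pow_apply, cEl_apply]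
theorem bgl_apply (lam : ℂ) (d : ℕ) (φ : PolA n) : bgl n lam d φ = bg lam d φ := by
  have : (Dop : PolA n → PolA n) = Dlin n := funext Dop_eq
  simp [bgl, bg, this, Module.End.pow_apply, cEl_apply]

section abstract_sums
open Finset
variable {V : Type*} [AddCommGroup V] [Module ℂ V] (L K : V →ₗ[ℂ] V) (h b : ℕ → V →ₗ[ℂ] V)
  (w : ℕ → V →ₗ[ℂ] V →ₗ[ℂ] V)

theorem conv1 (w : V →ₗ[ℂ] V →ₗ[ℂ] V) (φ ψ : V)
    (hh : ∀ i x, h i (L x) = L (h i x) + pv (fun i => K (h i x)) i) (r : ℕ) :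
    ∑ x ∈ antidiagonal r, w (h x.1 (L φ)) (h x.2 ψ) =
    ∑ x ∈ antidiagonal r, w (L (h x.1 φ)) (h x.2 ψ) +
      pv (fun r => ∑ x ∈ antidiagonal r, w (K (h x.1 φ)) (h x.2 ψ)) r := by
  rw [← pv_sum1 (fun i j => w (K (h i φ)) (h j ψ)), ← sum_add_distrib]
  refine sum_congr rfl fun x _ => ?_
  rw [hh, map_add, LinearMap.add_apply]
  congr 1
  rcases x with ⟨_ | i, j⟩ <;> simp [pv]

theorem conv2 (w : V →ₗ[ℂ] V →ₗ[ℂ] V) (φ ψ : V)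
    (hh : ∀ i x, h i (L x) = L (h i x) + pv (fun i => K (h i x)) i) (r : ℕ) :
    ∑ x ∈ antidiagonal r, w (h x.1 φ) (h x.2 (L ψ)) =
    ∑ x ∈ antidiagonal r, w (h x.1 φ) (L (h x.2 ψ)) +
      pv (fun r => ∑ x ∈ antidiagonal r, w (h x.1 φ) (K (h x.2 ψ))) r := by
  rw [← pv_sum2 (fun i j => w (h i φ) (K (h j ψ))), ← sum_add_distrib]
  refine sum_congr rfl fun x _ => ?_
  rw [hh, map_add]
  congr 1
  rcases x with ⟨i, _ | j⟩ <;> simp [pv]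

/-- Inner convolution. -/
def J (w : V →ₗ[ℂ] V →ₗ[ℂ] V) (φ ψ : V) (r : ℕ) : V :=
  ∑ x ∈ antidiagonal r, w (h x.1 φ) (h x.2 ψ)

/-- Middle convolution. -/
def Q (φ ψ : V) (q : ℕ) : V := ∑ y ∈ antidiagonal q, J h (w y.1) φ ψ y.2

theorem pv_add {M : Type*} [AddCommGroup M] (f g : ℕ → M) (k : ℕ) :
    pv (fun k => f k + g k) k = pv f k + pv g k := by cases k <;> simp [pv]

theorem Q_inv (φ ψ : V)
    (hh : ∀ i x, h i (L x) = L (h i x) + pv (fun i => K (h i x)) i)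
    (hw : ∀ k x y, L (w k x y) + pv (fun k => K (w k x y)) k =
      w k (L x) y + w k x (L y) + pv (fun k => w k (K x) y + w k x (K y)) k) (q : ℕ) :
    L (Q h w φ ψ q) + pv (fun q => K (Q h w φ ψ q)) q = Q h w (L φ) ψ q + Q h w φ (L ψ) q := by
  have e1 : pv (fun q => K (Q h w φ ψ q)) q =
      ∑ y ∈ antidiagonal q, pv (fun k => ∑ x ∈ antidiagonal y.2, K (w k (h x.1 φ) (h x.2 ψ))) y.1 := by
    rw [pv_sum1 (fun k r => ∑ x ∈ antidiagonal r, K (w k (h x.1 φ) (h x.2 ψ)))]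
    simp only [Q, J, map_sum]
  have e2 : ∑ y ∈ antidiagonal q, pv (fun r => ∑ x ∈ antidiagonal r,
        (w y.1 (K (h x.1 φ)) (h x.2 ψ) + w y.1 (h x.1 φ) (K (h x.2 ψ)))) y.2 =
      ∑ y ∈ antidiagonal q, pv (fun k => ∑ x ∈ antidiagonal y.2,
        (w k (K (h x.1 φ)) (h x.2 ψ) + w k (h x.1 φ) (K (h x.2 ψ)))) y.1 := by
    rw [pv_sum1 (fun k r => ∑ x ∈ antidiagonal r,
        (w k (K (h x.1 φ)) (h x.2 ψ) + w k (h x.1 φ) (K (h x.2 ψ)))),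
      pv_sum2 (fun k r => ∑ x ∈ antidiagonal r,
        (w k (K (h x.1 φ)) (h x.2 ψ) + w k (h x.1 φ) (K (h x.2 ψ))))]
  have e3 : Q h w (L φ) ψ q + Q h w φ (L ψ) q =
      ∑ y ∈ antidiagonal q, (∑ x ∈ antidiagonal y.2,
        (w y.1 (L (h x.1 φ)) (h x.2 ψ) + w y.1 (h x.1 φ) (L (h x.2 ψ)))) +
      ∑ y ∈ antidiagonal q, pv (fun r => ∑ x ∈ antidiagonal r,
        (w y.1 (K (h x.1 φ)) (h x.2 ψ) + w y.1 (h x.1 φ) (K (h x.2 ψ)))) y.2 := by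
    simp only [Q, J, conv1 L K h _ _ _ hh, conv2 L K h _ _ _ hh, sum_add_distrib, pv_add]
    abel
  rw [e3, e2, e1]
  simp only [Q, J, map_sum]
  rw [← sum_add_distrib, ← sum_add_distrib]
  refine sum_congr rfl fun y _ => ?_
  have hpv : ∀ (f : ℕ → ℕ × ℕ → V) k, pv (fun k => ∑ x ∈ antidiagonal y.2, f k x) k =
      ∑ x ∈ antidiagonal y.2, pv (fun k => f k x) k := by
    intro f k; cases k <;> simp [pv]
  rw [hpv, hpv, ← sum_add_distrib, ← sum_add_distrib]
  exact sum_congr rfl fun x _ => hw _ _ _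

theorem C_inv (φ ψ : V)
    (hh : ∀ i x, h i (L x) = L (h i x) + pv (fun i => K (h i x)) i)
    (hb : ∀ i x, L (b i x) = b i (L x) + pv (fun i => b i (K x)) i)
    (hw : ∀ k x y, L (w k x y) + pv (fun k => K (w k x y)) k =
      w k (L x) y + w k x (L y) + pv (fun k => w k (K x) y + w k x (K y)) k) (p : ℕ) :
    L (∑ z ∈ antidiagonal p, b z.1 (Q h w φ ψ z.2)) =
      ∑ z ∈ antidiagonal p, b z.1 (Q h w (L φ) ψ z.2) +
      ∑ z ∈ antidiagonal p, b z.1 (Q h w φ (L ψ) z.2) := by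
  have e : ∑ z ∈ antidiagonal p, pv (fun i => b i (K (Q h w φ ψ z.2))) z.1 =
      ∑ z ∈ antidiagonal p, b z.1 (pv (fun q => K (Q h w φ ψ q)) z.2) := by
    rw [pv_sum1 (fun m q => b m (K (Q h w φ ψ q))), ← pv_sum2 (fun m q => b m (K (Q h w φ ψ q)))]
    refine sum_congr rfl fun x _ => ?_
    rcases x with ⟨i, _ | j⟩ <;> simp [pv]
  rw [map_sum]
  simp only [hb, sum_add_distrib]
  rw [e, ← sum_add_distrib, ← sum_add_distrib]
  refine sum_congr rfl fun x _ => ?_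
  rw [← map_add, ← map_add, Q_inv L K h w φ ψ hh hw]

theorem sum4 (f : ℕ → ℕ → ℕ → ℕ → V) (p : ℕ) :
    (∑ i ∈ range (p + 1), ∑ j ∈ range (p + 1), ∑ k ∈ range (p + 1), ∑ m ∈ range (p + 1),
      if i + j + k + m = p then f i j k m else 0) =
    ∑ z ∈ antidiagonal p, ∑ y ∈ antidiagonal z.2, ∑ x ∈ antidiagonal y.2, f x.1 x.2 y.1 z.1 := by
  simp only [sum_sigma']
  rw [← sum_filter]
  refine sum_bij' (fun t _ => ⟨(t.2.2.2, t.1 + t.2.1 + t.2.2.1), ⟨(t.2.2.1, t.1 + t.2.1), (t.1, t.2.1)⟩⟩)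
    (fun s _ => ⟨s.2.2.1, s.2.2.2, s.2.1.1, s.1.1⟩) ?_ ?_ ?_ ?_ ?_
  · rintro ⟨i, j, k, m⟩ ht
    simp at ht ⊢
    omega
  · rintro ⟨⟨a, b⟩, ⟨c, d⟩, ⟨e, g⟩⟩ ht
    simp at ht ⊢
    omega
  · rintro ⟨i, j, k, m⟩ ht
    rfl
  · rintro ⟨⟨a, b⟩, ⟨c, d⟩, ⟨e, g⟩⟩ ht
    simp at ht ⊢
    omega
  · rintro ⟨i, j, k, m⟩ ht
    rfl

end abstract_sums

theorem C_eq (lam : ℂ) (p : ℕ) (φ ψ : PolA n) :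
    C n lam p φ ψ = ∑ z ∈ Finset.HasAntidiagonal.antidiagonal p, bgl n lam z.1
      (Q (bhl n lam) (fun k => W n (k + 2)) φ ψ z.2) := by
  simp only [Q, J, map_sum, bgl_apply, bhl_apply, W_Nop, C]
  simp only [← bgl_apply, map_sum]
  simp only [bgl_apply]
  exact sum4 (fun i j k m => bg lam m (Nop k (bh lam i φ) (bh lam j ψ))) p

theorem Act.C {lam : ℂ} {L η : PolA n →ₗ[ℂ] PolA n} (h : Act lam L η) (p : ℕ) (φ ψ : PolA n) :
    L (C n lam p φ ψ) = C n lam p (L φ) ψ + C n lam p φ (L ψ) := by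
  simp only [C_eq]
  refine C_inv L (L1 lam η) _ _ _ φ ψ ?_ ?_ ?_ p
  · intro i x
    cases i with
    | zero => simp [bhl_apply, h0, pv]
    | succ i => simp only [bhl_apply, pv, h.h_succ]
  · intro i x
    cases i with
    | zero => simp [bgl_apply, g0, pv]
    | succ i => simp only [bgl_apply, pv, h.g_succ]
  · intro k x y
    cases k with
    | zero => have := h.NL 0 x y; simpa [W, pv] using this
    | succ k => exact h.NL (k + 1) x y

/-- The Poisson bracket as a bilinear map. -/
noncomputable def pbl (n : ℕ) : PolA n →ₗ[ℂ] PolA n →ₗ[ℂ] PolA n :=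
  ∑ i : Fin n,
    ((LinearMap.mul ℂ (PolA n)).compl₁₂ (pderiv (Sum.inr i)).toLinearMap (pderiv (Sum.inl i)).toLinearMap
    - (LinearMap.mul ℂ (PolA n)).compl₁₂ (pderiv (Sum.inl i)).toLinearMap (pderiv (Sum.inr i)).toLinearMap)

theorem pbl_apply (φ ψ : PolA n) : pbl n φ ψ = pb φ ψ := by
  simp [pbl, pb]

theorem Act.zero_mk {lam : ℂ} (L : PolA n →ₗ[ℂ] PolA n)
    (h1 : ∀ c φ, L (cE c φ) = cE c (L φ)) (h2 : ∀ φ, Dop (L φ) = L (Dop φ))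
    (h3 : ∀ k φ ψ, L (W n (k + 2) φ ψ) = W n (k + 2) (L φ) ψ + W n (k + 2) φ (L ψ)) :
    Act lam L 0 where
  commE := h1
  etaE c φ := by simp [cE_zero]
  etaD φ := by simp [Dop]
  DL φ := by simp [cE_zero, h2]
  NL k φ ψ := by simp [L1, h3]

theorem d_ll (i j : Fin n) :
    pderiv (Sum.inl i) (X (Sum.inl j) : PolA n) = if i = j then 1 else 0 := by
  classical
  rw [pderiv_X, Pi.single_apply]; simp [eq_comm]
theorem d_rr (i j : Fin n) :
    pderiv (Sum.inr i) (X (Sum.inr j) : PolA n) = if i = j then 1 else 0 := by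
  classical
  rw [pderiv_X, Pi.single_apply]; simp [eq_comm]
theorem d_lr (i j : Fin n) :
    pderiv (Sum.inl i) (X (Sum.inr j) : PolA n) = 0 := pderiv_X_of_ne (by simp)
theorem d_rl (i j : Fin n) :
    pderiv (Sum.inr i) (X (Sum.inl j) : PolA n) = 0 := pderiv_X_of_ne (by simp)

theorem pb1 (i : Fin n) (φ : PolA n) : pb (X (Sum.inr i)) φ = pderiv (Sum.inl i) φ := by
  simp [-pderiv_X, pb, d_rr, d_lr]

theorem pb2 (i j : Fin n) (φ : PolA n) : pb (X (Sum.inl i) * X (Sum.inr j)) φ =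
    X (Sum.inl i) * pderiv (Sum.inl j) φ - X (Sum.inr j) * pderiv (Sum.inr i) φ := by
  simp [-pderiv_X, pb, d_rr, d_lr, d_rl, d_ll, Derivation.leibniz]

theorem pb3 (a : Fin n) (φ : PolA n) :
    pb (X (Sum.inl a) * ∑ k : Fin n, X (Sum.inl k) * X (Sum.inr k)) φ =
    ∑ i, (X (Sum.inl a) * (X (Sum.inl i) * pderiv (Sum.inl i) φ)
      - X (Sum.inl i) * (X (Sum.inr i) * pderiv (Sum.inr a) φ)
      - X (Sum.inl a) * (X (Sum.inr i) * pderiv (Sum.inr i) φ)) := by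
  simp [-pderiv_X, pb, d_rr, d_lr, d_rl, d_ll, Derivation.leibniz, add_mul, Finset.sum_add_distrib,
    Finset.sum_mul, mul_assoc]
  ring

theorem Dop_sum {ι : Type*} (s : Finset ι) (f : ι → PolA n) :
    Dop (∑ i ∈ s, f i) = ∑ i ∈ s, Dop (f i) := by
  simp only [Dop_eq, map_sum]

theorem Dop_X_inl (i : Fin n) (φ : PolA n) :
    Dop (X (Sum.inl i) * φ) = X (Sum.inl i) * Dop φ + pderiv (Sum.inr i) φ := by
  simp only [Dop, Derivation.leibniz, d_rl, d_ll, smul_eq_mul, mul_zero, add_zero,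
    Finset.sum_add_distrib, Finset.mul_sum]
  simp

theorem Dop_X_inr (i : Fin n) (φ : PolA n) :
    Dop (X (Sum.inr i) * φ) = X (Sum.inr i) * Dop φ + pderiv (Sum.inl i) φ := by
  simp only [Dop, pcomm (Sum.inl _) (Sum.inr _)]
  simp only [Derivation.leibniz, d_lr, d_rr, smul_eq_mul, mul_zero, add_zero,
    Finset.sum_add_distrib, Finset.mul_sum]
  simp

theorem Act1 (lam : ℂ) (i : Fin n) : Act lam (pbl n (X (Sum.inr i))) 0 := by
  apply Act.zero_mk <;> simp only [pbl_apply, pb1]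
  · exact fun c φ => cE_pderiv_inl c i φ
  · exact Dop_pderiv _
  · exact fun k φ ψ => W_der _ _ _ _

theorem Act2 (lam : ℂ) (i j : Fin n) :
    Act lam (pbl n (X (Sum.inl i) * X (Sum.inr j))) 0 := by
  apply Act.zero_mk <;> simp only [pbl_apply, pb2]
  · intro c φ
    rw [cE_sub, cE_X_inl, cE_Xeta, cE_pderiv_inl]
  · intro φ
    rw [Dop_sub, Dop_X_inl, Dop_X_inr, Dop_pderiv, Dop_pderiv, pcomm (Sum.inr i)]
    ring
  · intro k φ ψ
    simp only [W_der, map_sub, LinearMap.sub_apply, W_uL, W_xR, W_uR, W_xL]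
    ring

theorem Act3 (lam : ℂ) (a : Fin n) :
    Act lam (pbl n (X (Sum.inl a) * ∑ k : Fin n, X (Sum.inl k) * X (Sum.inr k)))
      (pderiv (Sum.inr a)).toLinearMap where
  commE c φ := by
    simp only [pbl_apply, pb3, cE_sum, cE_sub, cE_X_inl, cE_Xeta, cE_pderiv_inl]
  etaE c φ := cE_pderiv_inr c a φ
  etaD φ := Dop_pderiv _ _
  DL φ := by
    have e : cE (fun m => 2 * (m : ℂ) + n + 1) (pderiv (Sum.inr a) φ) =
        2 * ∑ i, X (Sum.inr i) * pderiv (Sum.inr i) (pderiv (Sum.inr a) φ) +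
        (n + 1) * pderiv (Sum.inr a) φ := by
      simp only [add_assoc, cE_addfun (fun m => 2 * (m : ℂ)), cE_smulfun, cE_const, cE_euler]
      simp only [Algebra.smul_def, map_add, map_natCast, map_one, map_ofNat]
    simp only [pbl_apply, pb3, Derivation.coeFn_coe]
    rw [e]
    simp only [Dop_sum, Dop_sub, Dop_X_inl, Dop_X_inr, Dop_pderiv, Derivation.leibniz, smul_eq_mul,
      d_rl, d_rr, mul_zero, add_zero, if_true, mul_one]
    have e2 : ((n : PolA n) + 1) * pderiv (Sum.inr a) φ = ∑ i : Fin n, (pderiv (Sum.inr a) φ +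
        pderiv (Sum.inr i) φ * (if a = i then 1 else 0 : PolA n)) := by
      simp [Finset.sum_add_distrib, add_mul]
    rw [e2]
    rw [Finset.mul_sum, ← Finset.sum_add_distrib, ← Finset.sum_sub_distrib]
    refine Finset.sum_congr rfl fun i _ => ?_
    rw [pcomm (Sum.inr i) (Sum.inr a), pcomm (Sum.inr a) (Sum.inl i), pcomm (Sum.inr i) (Sum.inl i)]
    ring
  NL k φ ψ := by
    have e : ∀ x : PolA n, L1 lam (pderiv (Sum.inr a)).toLinearMap x =
        - (∑ i, X (Sum.inr i) * pderiv (Sum.inr i) (pderiv (Sum.inr a) x) +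
        (lam * (n + 1)) • pderiv (Sum.inr a) x) := by
      intro x
      rw [L1_apply, cE_addfun, cE_const, cE_euler]; rfl
    simp only [pbl_apply, pb3, e]
    simp only [map_sub, map_sum, map_add, map_neg, map_smul, LinearMap.sub_apply, LinearMap.sum_apply,
      LinearMap.add_apply, LinearMap.neg_apply, LinearMap.smul_apply, W_der, W_uL, W_xR, W_uR, W_xL]
    simp only [Finset.sum_sub_distrib, Finset.sum_add_distrib, mul_add, smul_add]
    abel

theorem hom_iff (m : ℤ) (φ : PolA n) :
    IsXiHomog m φ ↔ cE (fun k => (k : ℂ)) φ = (m : ℂ) • φ := by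
  constructor
  · intro h
    ext d
    rw [coeff_cE, coeff_smul, smul_eq_mul]
    by_cases hd : d ∈ φ.support
    · rw [← h d hd]; simp
    · rw [notMem_support_iff.mp hd]; simp
  · intro h d hd
    have := congrArg (coeff d) h
    rw [coeff_cE, coeff_smul, smul_eq_mul] at this
    have := mul_right_cancel₀ (mem_support_iff.mp hd) this
    exact_mod_cast this

theorem hom_cE {m : ℤ} {φ : PolA n} (c : ℕ → ℂ) (h : IsXiHomog m φ) : IsXiHomog m (cE c φ) := by
  rw [hom_iff] at h ⊢
  rw [cE_cE, ← cE_smul, ← h, cE_cE]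
  simp only [mul_comm]

theorem hom_sum {m : ℤ} {ι : Type*} (s : Finset ι) (f : ι → PolA n)
    (h : ∀ i ∈ s, IsXiHomog m (f i)) : IsXiHomog m (∑ i ∈ s, f i) := by
  simp only [hom_iff] at h ⊢
  rw [cE_sum, Finset.smul_sum]
  exact Finset.sum_congr rfl h

theorem hom_zero (m : ℤ) : IsXiHomog m (0 : PolA n) := by
  rw [hom_iff]; simp [cE_zero]

theorem hom_smul {m : ℤ} {φ : PolA n} (r : ℂ) (h : IsXiHomog m φ) : IsXiHomog m (r • φ) := by
  rw [hom_iff] at h ⊢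
  rw [cE_smul, h, smul_comm]

theorem hom_inl {m : ℤ} {φ : PolA n} (i : Fin n) (h : IsXiHomog m φ) :
    IsXiHomog m (pderiv (Sum.inl i) φ) := by
  rw [hom_iff] at h ⊢
  rw [← cE_pderiv_inl, h, Derivation.map_smul]

theorem hom_inr {m : ℤ} {φ : PolA n} (i : Fin n) (h : IsXiHomog m φ) :
    IsXiHomog (m - 1) (pderiv (Sum.inr i) φ) := by
  rw [hom_iff] at h ⊢
  have e := cE_pderiv_inr (fun k => (k : ℂ)) i φ
  rw [h, Derivation.map_smul] at e
  push_cast at e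
  rw [cE_addfun, cE_const] at e
  push_cast
  rw [sub_smul, e]
  simp

theorem hom_mul {a b : ℤ} {φ ψ : PolA n} (h1 : IsXiHomog a φ) (h2 : IsXiHomog b ψ) :
    IsXiHomog (a + b) (φ * ψ) := by
  rw [hom_iff] at h1 h2 ⊢
  have e : cE (fun k => (k : ℂ)) (φ * ψ) =
      cE (fun k => (k : ℂ)) φ * ψ + φ * cE (fun k => (k : ℂ)) ψ := by
    simp only [cE_euler, Finset.sum_mul, Finset.mul_sum, ← Finset.sum_add_distrib,
      Derivation.leibniz, smul_eq_mul]
    exact Finset.sum_congr rfl fun i _ => by ring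
  rw [e, h1, h2]
  push_cast
  rw [add_smul, smul_mul_assoc, mul_smul_comm]

theorem hom_D (d : ℕ) {m : ℤ} {φ : PolA n} (h : IsXiHomog m φ) : IsXiHomog (m - d) (Dop^[d] φ) := by
  induction d with
  | zero => simpa using h
  | succ d ih =>
    rw [Function.iterate_succ_apply']
    have : m - ((d + 1 : ℕ) : ℤ) = m - d - 1 := by push_cast; ring
    rw [this]
    exact hom_sum _ _ fun i _ => hom_inl i (hom_inr i ih)

theorem hom_M (k : ℕ) : ∀ {a b : ℤ} {φ ψ : PolA n}, IsXiHomog a φ → IsXiHomog b ψ →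
    IsXiHomog (a + b - k) (Ml n k φ ψ) := by
  induction k with
  | zero => intro a b φ ψ h1 h2; simpa [Ml_zero] using hom_mul h1 h2
  | succ k ih =>
    intro a b φ ψ h1 h2
    rw [Ml_succ]
    have : a + b - ((k + 1 : ℕ) : ℤ) = a - 1 + b - k := by push_cast; ring
    rw [this]
    exact hom_sum _ _ fun i _ => ih (hom_inr i h1) (hom_inl i h2)

theorem hom_C (lam : ℂ) (p : ℕ) {a b : ℤ} {φ ψ : PolA n} (h1 : IsXiHomog a φ)
    (h2 : IsXiHomog b ψ) : IsXiHomog (a + b - p) (C n lam p φ ψ) := by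
  unfold C
  refine hom_sum _ _ fun i _ => hom_sum _ _ fun j _ => hom_sum _ _ fun k _ => hom_sum _ _ fun m _ => ?_
  split_ifs with h
  · have : a + b - (p : ℤ) = (a - i) + (b - j) - k - m := by rw [← h]; push_cast; ring
    rw [this, ← W_Nop]
    exact hom_cE _ (hom_D _ (hom_smul _ (hom_M _ (hom_cE _ (hom_D _ h1)) (hom_cE _ (hom_D _ h2)))))
  · exact hom_zero _

theorem mom_inv (lam : ℂ) (p : ℕ) (c s : ℕ → ℂ) (μ : PolA n) (hμ : μ ∈ momSpan n) (φ ψ : PolA n) :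
    pb μ (cE c (C n lam p (cE s φ) (cE s ψ))) =
      cE c (C n lam p (cE s (pb μ φ)) (cE s ψ)) + cE c (C n lam p (cE s φ) (cE s (pb μ ψ))) := by
  have key : ∀ {ν : PolA n} {η : PolA n →ₗ[ℂ] PolA n}, Act lam (pbl n ν) η →
      (∀ φ, pb ν (cE c φ) = cE c (pb ν φ)) ∧ (∀ φ, pb ν (cE s φ) = cE s (pb ν φ)) ∧
      ∀ φ ψ, pb ν (C n lam p φ ψ) = C n lam p (pb ν φ) ψ + C n lam p φ (pb ν ψ) := by
    intro ν η h
    simp only [← pbl_apply]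
    exact ⟨h.commE c, h.commE s, h.C p⟩
  have Clin : ∀ φ : PolA n, ∃ F : PolA n →ₗ[ℂ] PolA n, ∀ ψ, F ψ = C n lam p φ ψ := by
    intro φ
    refine ⟨∑ z ∈ Finset.HasAntidiagonal.antidiagonal p, bgl n lam z.1 ∘ₗ
      (∑ y ∈ Finset.HasAntidiagonal.antidiagonal z.2, ∑ x ∈ Finset.HasAntidiagonal.antidiagonal y.2,
        (W n (y.1 + 2) (bhl n lam x.1 φ)) ∘ₗ bhl n lam x.2), fun ψ => ?_⟩
    simp [C_eq, Q, J]
  have Clin' : ∀ ψ : PolA n, ∃ F : PolA n →ₗ[ℂ] PolA n, ∀ φ, F φ = C n lam p φ ψ := by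
    intro ψ
    refine ⟨∑ z ∈ Finset.HasAntidiagonal.antidiagonal p, bgl n lam z.1 ∘ₗ
      (∑ y ∈ Finset.HasAntidiagonal.antidiagonal z.2, ∑ x ∈ Finset.HasAntidiagonal.antidiagonal y.2,
        ((W n (y.1 + 2)).flip (bhl n lam x.2 ψ)) ∘ₗ bhl n lam x.1), fun φ => ?_⟩
    simp [C_eq, Q, J]
  have all : (∀ φ, pb μ (cE c φ) = cE c (pb μ φ)) ∧ (∀ φ, pb μ (cE s φ) = cE s (pb μ φ)) ∧
      ∀ φ ψ, pb μ (C n lam p φ ψ) = C n lam p (pb μ φ) ψ + C n lam p φ (pb μ ψ) := by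
    unfold momSpan at hμ
    induction hμ using Submodule.span_induction with
    | mem x hx =>
      rcases hx with (⟨i, rfl⟩ | ⟨ij, rfl⟩) | ⟨a, rfl⟩
      · exact key (Act1 lam i)
      · exact key (Act2 lam ij.1 ij.2)
      · exact key (Act3 lam a)
    | zero =>
      have hz : ∀ φ : PolA n, pb 0 φ = 0 := fun φ => by rw [← pbl_apply]; simp
      refine ⟨fun φ => by simp [hz, cE_zero], fun φ => by simp [hz, cE_zero], fun φ ψ => ?_⟩
      obtain ⟨F, hF⟩ := Clin φ
      obtain ⟨G, hG⟩ := Clin' ψ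
      rw [hz, hz, hz, ← hF, ← hG]; simp
    | add x y _ _ hx hy =>
      have hz : ∀ φ : PolA n, pb (x + y) φ = pb x φ + pb y φ := fun φ => by
        simp only [← pbl_apply, map_add, LinearMap.add_apply]
      refine ⟨fun φ => by rw [hz, hz, cE_add, hx.1, hy.1],
        fun φ => by rw [hz, hz, cE_add, hx.2.1, hy.2.1], fun φ ψ => ?_⟩
      obtain ⟨F, hF⟩ := Clin φ
      obtain ⟨G, hG⟩ := Clin' ψ
      rw [hz, hz, hz, hx.2.2, hy.2.2]
      simp only [← hF ψ, ← hF (pb x ψ), ← hF (pb y ψ), ← hF (pb x ψ + pb y ψ),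
        ← hG (pb x φ), ← hG (pb y φ), ← hG (pb x φ + pb y φ), map_add]
      abel
    | smul r x _ hx =>
      have hz : ∀ φ : PolA n, pb (r • x) φ = r • pb x φ := fun φ => by
        simp only [← pbl_apply, map_smul, LinearMap.smul_apply]
      refine ⟨fun φ => by rw [hz, hz, cE_smul, hx.1],
        fun φ => by rw [hz, hz, cE_smul, hx.2.1], fun φ ψ => ?_⟩
      obtain ⟨F, hF⟩ := Clin φ
      obtain ⟨G, hG⟩ := Clin' ψ
      rw [hz, hz, hz, hx.2.2, ← hF (r • _), ← hG (r • _), map_smul, map_smul, hF, hG, smul_add]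
  rw [all.1, all.2.2, all.2.1, all.2.1, cE_add]

end LO

/-- Theorem 5, invariance and homogeneity: for `n` odd and `p ≥ 1`,
`Z_p(φ,ψ) = T_p(C^{1/2}_p(S_p φ, S_p ψ))` is infinitesimally `sl_{n+1}(ℝ)`-invariant
and has total homogeneous degree `−p`. -/
theorem stmt_13 (n : ℕ) (hn : Odd n) (p : ℕ) (hp : 1 ≤ p) :
    (∀ μ ∈ LO.momSpan n, ∀ φ ψ : PolA n,
        LO.pb μ (LO.Tp n p (LO.C n (1 / 2) p (LO.Sp n p φ) (LO.Sp n p ψ))) =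
          LO.Tp n p (LO.C n (1 / 2) p (LO.Sp n p (LO.pb μ φ)) (LO.Sp n p ψ)) +
          LO.Tp n p (LO.C n (1 / 2) p (LO.Sp n p φ) (LO.Sp n p (LO.pb μ ψ)))) ∧
    (∀ (j k : ℕ) (φ ψ : PolA n), LO.IsXiHomog (j : ℤ) φ → LO.IsXiHomog (k : ℤ) ψ →
        LO.IsXiHomog ((j : ℤ) + (k : ℤ) - (p : ℤ))
          (LO.Tp n p (LO.C n (1 / 2) p (LO.Sp n p φ) (LO.Sp n p ψ)))) := by
  exact ⟨fun μ hμ φ ψ => LO.mom_inv _ p _ _ μ hμ φ ψ,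
    fun j k φ ψ h1 h2 => LO.hom_cE _ (LO.hom_C _ p (LO.hom_cE _ h1) (LO.hom_cE _ h2))⟩
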